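/- arXiv:1509.01645 — 2 statements merged into one kernel-verified Lean document; each statement's English description precedes it below -/
import Mathlib

section
/- Let p be a prime and n ≥ 2 a natural number, and let G = ℤ_p^n be the direct product of n copies of the additive group of the p-adic integers, with the product topology. Then G has no test elements: for every x ∈ G there exists a continuous group homomorphism φ : G → G with φ(x) = x that is not bijective. -/
/-!
Over a Bézout ring, the coordinates of a vector `x` of a free module generate a principal ideal
`(d)`. Hence `x = d • u` for some `u`, and a Bézout identity for `d` is a linear form `f` with
`f x = d`. The endomorphism `y ↦ f y • u` fixes `x`, but it factors through a rank-one module, so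
it is not injective as soon as the rank is at least two.
-/

open Function

section Bezout

variable {R : Type*} [CommRing R] [IsBezout R]

theorem exists_sum_mul_dvd {ι : Type*} [Fintype ι] (v : ι → R) :
    ∃ a : ι → R, ∀ i, ∑ j, a j * v j ∣ v i := by
  obtain ⟨d, hd : Ideal.span (Set.range v) = Ideal.span {d}⟩ :=
    IsBezout.isPrincipal_of_FG _ (Submodule.fg_span (Set.finite_range v))
  obtain ⟨a, rfl⟩ : ∃ a : ι → R, ∑ j, a j * v j = d :=
    Ideal.mem_span_range_iff_exists_fun.mp (hd ▸ Ideal.mem_span_singleton_self d)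
  exact ⟨a, fun i ↦ Ideal.mem_span_singleton.mp (hd ▸ Ideal.subset_span (Set.mem_range_self i))⟩

theorem exists_dual_apply_smul_eq_self {M : Type*} [AddCommGroup M] [Module R M] [Module.Free R M]
    (x : M) : ∃ (f : Module.Dual R M) (u : M), f x • u = x := by
  let b := Module.Free.chooseBasis R M
  let s := (b.repr x).support
  obtain ⟨a, sum_dvd⟩ := exists_sum_mul_dvd fun i : s ↦ b.repr x i
  choose c hc using sum_dvd
  refine ⟨∑ j : s, a j • b.coord j, ∑ i : s, c i • b i, ?_⟩
  calc (∑ j : s, a j • b.coord j) x • ∑ i : s, c i • b i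
      = ∑ i : s, ((∑ j : s, a j * b.repr x j) * c i) • b i := by
        simp only [LinearMap.sum_apply, LinearMap.smul_apply, Module.Basis.coord_apply,
          smul_eq_mul, Finset.smul_sum, smul_smul]
    _ = ∑ i : s, b.repr x i • b i := by simp only [← hc]
    _ = ∑ i ∈ s, b.repr x i • b i := Finset.sum_coe_sort s fun i ↦ b.repr x i • b i
    _ = x := b.linearCombination_repr x

end Bezout

theorem dual_not_injective_of_one_lt_rank {R M : Type*} [CommRing R]
    [AddCommGroup M] [Module R M] (hM : 1 < Module.rank R M) (f : Module.Dual R M) :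
    ¬ Injective f := by
  intro hf
  have : Nontrivial R :=
    not_subsingleton_iff_nontrivial.mp fun _ ↦ hM.ne' (rank_subsingleton R M)
  exact hM.not_ge <| by simpa using LinearMap.lift_rank_le_of_injective f hf

theorem stmt_7_general {R M : Type*} [CommRing R] [IsBezout R]
    [TopologicalSpace R] [AddCommGroup M] [Module R M] [Module.Free R M]
    [TopologicalSpace M] [IsModuleTopology R M] (hM : 1 < Module.rank R M) (x : M) :
    ∃ φ : M →L[R] M, φ x = x ∧ ¬ Injective φ := by
  have := IsModuleTopology.toContinuousAdd R M
  obtain ⟨f, u, hfu⟩ := exists_dual_apply_smul_eq_self (R := R) x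
  refine ⟨⟨f.smulRight u, IsModuleTopology.continuous_of_linearMap _⟩, hfu, fun hφ ↦ ?_⟩
  have hf : Injective ((· • u) ∘ f) := hφ
  exact dual_not_injective_of_one_lt_rank hM f hf.of_comp

theorem stmt_7 {p : ℕ} [Fact p.Prime] {n : ℕ} (hn : 2 ≤ n) :
    ∀ x : Fin n → ℤ_[p],
      ∃ φ : (Fin n → ℤ_[p]) →+ (Fin n → ℤ_[p]),
        Continuous φ ∧ φ x = x ∧ ¬ Function.Bijective φ := by
  intro x
  obtain ⟨φ, hφx, hφ⟩ := stmt_7_general (R := ℤ_[p]) (by rw [rank_fin_fun]; exact_mod_cast hn) x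
  exact ⟨φ.toLinearMap.toAddMonoidHom, φ.continuous, hφx, fun h ↦ hφ h.injective⟩
end

section
/- Let D be the free group on a finite set of n generators (n ≥ 1). Then the set of test elements of D is dense in the profinite topology on D: for every w ∈ D and every normal subgroup N of D of finite index, the coset wN contains a test element of D. -/
/-!
Let `C` be cyclic of prime order `p`, and let `v` be the product of the `p`-th powers of the free
generators. If `φ` fixes a word `g` that every homomorphism to the wreath product `C ≀ᵣ C` maps to
the same element as `v`, then `φ` does not annihilate any nontrivial `χ : D → C`: taking one
generator to an element with nontrivial right component, `χ` becomes the product of the base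
coordinates of a homomorphism to the wreath product, and `p`-th powers see exactly that product. A
count of homomorphisms to `C`, Nielsen–Schreier and the Hopf property then make `φ` injective.

By Turner's argument, a word fixed by injective endomorphisms only is a test element. The key point
is that in any subgroup `H` of a free group the elements of length at most `R` generate a retract
of `H`: truncate the Schreier cocycle of minimal coset representatives. A reduced word of `H` with
at most `R` letters is a product of Schreier generators no longer than itself, so the truncation
does not affect it.

Finally `C ≀ᵣ C` has exponent `p ^ 2`, which is prime to `N.index !` for `p > N.index`. By the
Chinese remainder theorem the coset `w N` contains an element that every homomorphism to `C ≀ᵣ C`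
maps to the same element as `v`.
-/

namespace TestElements

theorem exists_perm_eqOn_of_finite {X : Type*} (σ : Equiv.Perm X) (S : Set X) [Finite S] :
    ∃ τ : Equiv.Perm S, ∀ x : S, σ x ∈ S → (τ x : X) = σ x := by
  classical
  have := Fintype.ofFinite S
  obtain ⟨e, he⟩ := Set.MapsTo.exists_equiv_extend_of_card_eq (t := S.toFinset)
    (s := {x : S | σ x ∈ S}) (f := fun x : S ↦ σ x) S.toFinset_card.symm
    (fun x hx ↦ by simpa using hx) (σ.injective.comp Subtype.val_injective).injOn
  exact ⟨e.trans (Equiv.subtypeEquivRight fun _ ↦ Set.mem_toFinset), he⟩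

theorem exists_perm_rep_of_finite {α : Type*} (S : Set (FreeGroup α)) [Finite S] :
    ∃ ρ : FreeGroup α →* Equiv.Perm S, ∀ (a : α × Bool) (x : S),
      .mk [a] * (x : FreeGroup α) ∈ S → (ρ (.mk [a]) x : FreeGroup α) = .mk [a] * x := by
  choose τ hτ using fun i : α ↦ exists_perm_eqOn_of_finite (Equiv.mulLeft (FreeGroup.of i)) S
  refine ⟨FreeGroup.lift τ, ?_⟩
  rintro ⟨i, _ | _⟩ x hx
  · have hinv : FreeGroup.mk [(i, false)] = (FreeGroup.of i)⁻¹ := rfl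
    rw [hinv] at hx ⊢
    have hτx : τ i ⟨_, hx⟩ = x := Subtype.ext (by simp [hτ i ⟨_, hx⟩])
    rw [map_inv, FreeGroup.lift_apply_of, Equiv.Perm.inv_eq_iff_eq.2 hτx.symm]
  · simpa using! hτ i x hx

instance residuallyFinite_freeGroup (α : Type*) : Group.ResiduallyFinite (FreeGroup α) := by
  classical
  refine Group.residuallyFinite_of_forall_exists_finite_monoidHom fun g hg ↦ ?_
  let S : Set (FreeGroup α) := FreeGroup.mk '' {v | v <:+ g.toWord}
  have : Finite S := Set.Finite.image _ <|
    (List.finite_toSet g.toWord.tails).subset fun v hv ↦ (List.mem_tails v _).2 hv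
  have mem_S {v : List (α × Bool)} (hv : v <:+ g.toWord) : FreeGroup.mk v ∈ S := ⟨v, hv, rfl⟩
  obtain ⟨ρ, hρ⟩ := exists_perm_rep_of_finite S
  let one : S := ⟨1, mem_S g.toWord.nil_suffix⟩
  have apply_suffix (v : List (α × Bool)) (hv : v <:+ g.toWord) :
      ρ (.mk v) one = ⟨.mk v, mem_S hv⟩ := by
    induction v with
    | nil => exact Equiv.Perm.congr_fun (map_one ρ) one
    | cons a v ih =>
      have hsplit : FreeGroup.mk (a :: v) = FreeGroup.mk [a] * FreeGroup.mk v := rfl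
      have hv' : v <:+ g.toWord := (List.suffix_cons a v).trans hv
      simp only [hsplit, map_mul, Equiv.Perm.mul_apply, ih hv']
      exact Subtype.ext (hρ a ⟨_, mem_S hv'⟩ (mem_S hv))
  refine ⟨Equiv.Perm S, inferInstance, inferInstance, ρ, fun h ↦ hg ?_⟩
  have happly : (ρ (.mk g.toWord) one : FreeGroup α) = .mk g.toWord :=
    congrArg Subtype.val (apply_suffix _ List.suffix_rfl)
  rw [FreeGroup.mk_toWord, h] at happly
  exact happly.symm

section Hopf
variable {G : Type*} [Group G]

theorem finite_monoidHom_of_fg [Group.FG G] (P : Type*) [Group P] [Finite P] :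
    Finite (G →* P) := by
  obtain ⟨S, hS⟩ := Group.fg_def.1 ‹Group.FG G›
  exact .of_injective (fun (f : G →* P) (s : S) ↦ f s) fun f f' h ↦
    MonoidHom.eq_of_eqOn_dense hS fun s hs ↦ congrFun h ⟨s, hs⟩

/-- Malcev: precomposition with `φ` permutes the finite set of homomorphisms to a finite group. -/
theorem injective_of_surjective_of_residuallyFinite [Group.FG G] [Group.ResiduallyFinite G]
    (φ : G →* G) (hφ : Function.Surjective φ) : Function.Injective φ := by
  refine (injective_iff_map_eq_one φ).2 fun g hg ↦
    Group.eq_one_iff_forall_finiteIndexNormalSubroup g fun N ↦ ?_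
  have := finite_monoidHom_of_fg (G := G) (G ⧸ N.toSubgroup)
  have hinj : Function.Injective fun ψ : G →* G ⧸ N.toSubgroup ↦ ψ.comp φ :=
    fun _ _ h ↦ (MonoidHom.cancel_right hφ).1 h
  obtain ⟨ψ, hψ⟩ := Finite.surjective_of_injective hinj (QuotientGroup.mk' N.toSubgroup)
  rw [← FiniteIndexNormalSubgroup.mem_toSubgroup_iff, ← QuotientGroup.ker_mk' N.toSubgroup, ← hψ]
  simp [MonoidHom.mem_ker, hg]

end Hopf

theorem finite_generators_of_finite_monoidHom (K C : Type*) [Group K] [IsFreeGroup K] [Group C]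
    [Nontrivial C] [Finite (K →* C)] : Finite (IsFreeGroup.Generators K) := by
  have : Finite (IsFreeGroup.Generators K → C) := .of_equiv _ IsFreeGroup.lift.symm
  by_contra h
  have := not_finite_iff_infinite.1 h
  exact not_finite (IsFreeGroup.Generators K → C)

/-- The image of `φ` has as many homomorphisms to `C` as `FreeGroup α`, so by Nielsen–Schreier it
is free of the same rank, and `φ` becomes a surjective endomorphism. -/
theorem injective_of_injective_precomp {α C : Type*} [Finite α] [Group C] [Finite C] [Nontrivial C]
    (φ : FreeGroup α →* FreeGroup α)
    (hφ : Function.Injective fun χ : FreeGroup α →* C ↦ χ.comp φ) : Function.Injective φ := by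
  let K := φ.range
  have restrict_inj : Function.Injective fun χ : FreeGroup α →* C ↦ χ.comp K.subtype :=
    fun χ χ' h ↦ hφ <| congrArg (fun η : K →* C ↦ η.comp φ.rangeRestrict) h
  have precomp_inj : Function.Injective fun χ : K →* C ↦ χ.comp φ.rangeRestrict :=
    fun _ _ h ↦ (MonoidHom.cancel_right φ.rangeRestrict_surjective).1 h
  have : Finite (FreeGroup α →* C) := finite_monoidHom_of_fg C
  have : Finite (K →* C) := .of_injective _ precomp_inj
  have : Finite (IsFreeGroup.Generators K) := finite_generators_of_finite_monoidHom K C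
  have card_hom : Nat.card (K →* C) = Nat.card (FreeGroup α →* C) :=
    le_antisymm (Nat.card_le_card_of_injective _ precomp_inj)
      (Nat.card_le_card_of_injective _ restrict_inj)
  rw [← Nat.card_congr IsFreeGroup.lift, ← Nat.card_congr FreeGroup.lift, Nat.card_fun,
    Nat.card_fun] at card_hom
  obtain ⟨σ⟩ := Finite.card_eq.1 (Nat.pow_right_injective Finite.one_lt_card card_hom)
  let e : K ≃* FreeGroup α := (IsFreeGroup.toFreeGroup K).trans (FreeGroup.freeGroupCongr σ)
  have comp_inj : Function.Injective (e ∘ φ.rangeRestrict) :=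
    injective_of_surjective_of_residuallyFinite (e.toMonoidHom.comp φ.rangeRestrict)
      (e.surjective.comp φ.rangeRestrict_surjective)
  exact φ.rangeRestrict_injective_iff.1 comp_inj.of_comp

section Cocycle
variable {α A X : Type*} [Group A] [MulAction (FreeGroup α) X]

attribute [local instance] arrowMulDistribMulAction in
/-- The homomorphism `w ↦ (cocycle γ w, w)` whose first component is the cocycle determined by its
values `γ i` on the free generators. -/
def cocycleLift (γ : α → X → A) : FreeGroup α →* (X → A) ⋊[mulAutArrow] FreeGroup α :=
  FreeGroup.lift fun i ↦ ⟨γ i, .of i⟩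

theorem cocycleLift_right (γ : α → X → A) (w : FreeGroup α) : (cocycleLift γ w).right = w := by
  have : SemidirectProduct.rightHom.comp (cocycleLift γ) = .id (FreeGroup α) :=
    FreeGroup.ext_hom _ _ fun i ↦ by simp [cocycleLift]
  exact DFunLike.congr_fun this w

/-- The `A`-valued cocycle on `FreeGroup α` acting on `X` with value `γ i` on each generator. -/
def cocycle (γ : α → X → A) (w : FreeGroup α) : X → A := (cocycleLift γ w).left

theorem cocycle_of (γ : α → X → A) (i : α) : cocycle γ (.of i) = γ i := by
  simp [cocycle, cocycleLift]

theorem cocycle_one (γ : α → X → A) : cocycle γ 1 = 1 := by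
  simp [cocycle]

theorem cocycle_mul (γ : α → X → A) (v w : FreeGroup α) (x : X) :
    cocycle γ (v * w) x = cocycle γ v x * cocycle γ w (v⁻¹ • x) := by
  simp only [cocycle, map_mul, SemidirectProduct.mul_left, cocycleLift_right]
  rfl

theorem cocycle_inv (γ : α → X → A) (w : FreeGroup α) (x : X) :
    cocycle γ w⁻¹ x = (cocycle γ w (w • x))⁻¹ := by
  have h := cocycle_mul γ w w⁻¹ (w • x)
  rw [mul_inv_cancel, cocycle_one, inv_smul_smul] at h
  exact eq_inv_of_mul_eq_one_right h.symm

end Cocycle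

section Schreier
variable {α : Type*} [DecidableEq α] (H : Subgroup (FreeGroup α))

/-- An element of minimal length in a left coset of `H`. -/
noncomputable def shortRep (c : FreeGroup α ⧸ H) : FreeGroup α :=
  Function.argminOn FreeGroup.norm (QuotientGroup.mk ⁻¹' {c}) (QuotientGroup.mk_surjective c)

theorem mk_shortRep (c : FreeGroup α ⧸ H) : (shortRep H c : FreeGroup α ⧸ H) = c :=
  Function.argminOn_mem FreeGroup.norm (QuotientGroup.mk ⁻¹' {c}) _

theorem norm_shortRep_mk_le (f : FreeGroup α) : (shortRep H f).norm ≤ f.norm :=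
  Function.argminOn_le FreeGroup.norm (QuotientGroup.mk ⁻¹' {(f : FreeGroup α ⧸ H)}) rfl

theorem shortRep_one : shortRep H (1 : FreeGroup α) = 1 :=
  FreeGroup.norm_eq_zero.1 <| Nat.le_zero.1 <| (norm_shortRep_mk_le H 1).trans_eq FreeGroup.norm_one

/-- The Schreier cocycle of the minimal coset representatives; at the trivial coset it is the
identity on `H`. -/
noncomputable def schreierCocycle (w : FreeGroup α) (c : FreeGroup α ⧸ H) : FreeGroup α :=
  (shortRep H c)⁻¹ * w * shortRep H (w⁻¹ • c)

theorem schreierCocycle_mem (w : FreeGroup α) (c : FreeGroup α ⧸ H) :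
    schreierCocycle H w c ∈ H := by
  rw [schreierCocycle, mul_assoc, ← QuotientGroup.eq, mk_shortRep, ← smul_eq_mul,
    ← MulAction.Quotient.smul_coe, mk_shortRep, smul_inv_smul]

theorem schreierCocycle_mul (v w : FreeGroup α) (c : FreeGroup α ⧸ H) :
    schreierCocycle H (v * w) c = schreierCocycle H v c * schreierCocycle H w (v⁻¹ • c) := by
  simp only [schreierCocycle, mul_inv_rev, mul_smul]
  group

theorem schreierCocycle_inv (w : FreeGroup α) (c : FreeGroup α ⧸ H) :
    schreierCocycle H w⁻¹ c = (schreierCocycle H w (w • c))⁻¹ := by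
  simp only [schreierCocycle, inv_inv, inv_smul_smul]
  group

theorem schreierCocycle_of_mem {h : FreeGroup α} (hh : h ∈ H) :
    schreierCocycle H h (1 : FreeGroup α) = h := by
  have : h⁻¹ • ((1 : FreeGroup α) : FreeGroup α ⧸ H) = (1 : FreeGroup α) := by
    simpa [QuotientGroup.eq] using hh
  rw [schreierCocycle, this, shortRep_one, inv_one, one_mul, mul_one]

open Classical in
/-- The cocycle agreeing with the Schreier cocycle on the generators wherever that takes values in
`H₀`, and trivial on the generators elsewhere. -/
noncomputable def truncatedCocycle (H₀ : Subgroup (FreeGroup α)) :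
    FreeGroup α → FreeGroup α ⧸ H → H₀ :=
  cocycle fun i c ↦ if h : schreierCocycle H (.of i) c ∈ H₀ then ⟨_, h⟩ else 1

variable {H} {H₀ : Subgroup (FreeGroup α)} {R : ℕ}

theorem truncatedCocycle_mk_singleton (a : α × Bool) (c : FreeGroup α ⧸ H)
    (h : schreierCocycle H (.mk [a]) c ∈ H₀) :
    (truncatedCocycle H H₀ (.mk [a]) c : FreeGroup α) = schreierCocycle H (.mk [a]) c := by
  obtain ⟨i, _ | _⟩ := a
  · have hinv : FreeGroup.mk [(i, false)] = (FreeGroup.of i)⁻¹ := rfl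
    rw [hinv, schreierCocycle_inv] at h ⊢
    rw [truncatedCocycle, cocycle_inv, cocycle_of, dif_pos (inv_mem_iff.1 h), H₀.coe_inv]
  · have hof : FreeGroup.mk [(i, true)] = FreeGroup.of i := rfl
    rw [hof] at h ⊢
    rw [truncatedCocycle, cocycle_of, dif_pos h]

theorem norm_schreierCocycle_letter_le {u v : List (α × Bool)} {a : α × Bool}
    (huv : FreeGroup.mk (u ++ a :: v) ∈ H) :
    (schreierCocycle H (.mk [a]) (FreeGroup.mk (a :: v))).norm ≤ (u ++ a :: v).length := by
  have hcoset : (FreeGroup.mk (a :: v) : FreeGroup α ⧸ H) = ((FreeGroup.mk u)⁻¹ : FreeGroup α) := by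
    rw [eq_comm, QuotientGroup.eq, inv_inv, FreeGroup.mul_mk]
    exact huv
  have hnext : (FreeGroup.mk [a])⁻¹ • (FreeGroup.mk (a :: v) : FreeGroup α ⧸ H) =
      FreeGroup.mk v := inv_smul_eq_iff.2 rfl
  have hu : (shortRep H (FreeGroup.mk (a :: v)))⁻¹.norm ≤ u.length := by
    rw [FreeGroup.norm_inv_eq, hcoset]
    exact (norm_shortRep_mk_le H _).trans (FreeGroup.norm_inv_eq.trans_le FreeGroup.norm_mk_le)
  have hv : (shortRep H (FreeGroup.mk v)).norm ≤ v.length :=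
    (norm_shortRep_mk_le H _).trans FreeGroup.norm_mk_le
  have ha : (FreeGroup.mk [a]).norm ≤ 1 := FreeGroup.norm_mk_le
  rw [schreierCocycle, hnext, List.length_append, List.length_cons]
  grw [FreeGroup.norm_mul_le, FreeGroup.norm_mul_le, hu, ha, hv]
  lia

theorem truncatedCocycle_suffix (hR : ∀ h ∈ H, h.norm ≤ R → h ∈ H₀) (u v : List (α × Bool))
    (huv : FreeGroup.mk (u ++ v) ∈ H) (hlen : (u ++ v).length ≤ R) :
    (truncatedCocycle H H₀ (.mk v) (FreeGroup.mk v) : FreeGroup α) =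
      schreierCocycle H (.mk v) (FreeGroup.mk v) := by
  induction v generalizing u with
  | nil =>
    rw [← FreeGroup.one_eq_mk, truncatedCocycle, cocycle_one, schreierCocycle_of_mem H H.one_mem]
    rfl
  | cons a v ih =>
    have hsplit : FreeGroup.mk (a :: v) = FreeGroup.mk [a] * FreeGroup.mk v := rfl
    have hnext : (FreeGroup.mk [a])⁻¹ • (FreeGroup.mk (a :: v) : FreeGroup α ⧸ H) =
        FreeGroup.mk v := inv_smul_eq_iff.2 rfl
    have hletter := truncatedCocycle_mk_singleton a (FreeGroup.mk (a :: v) : FreeGroup α ⧸ H) <|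
      hR _ (schreierCocycle_mem H _ _) ((norm_schreierCocycle_letter_le huv).trans hlen)
    have hrest := ih (u ++ [a]) (by simpa using huv) (by simpa using hlen)
    conv_lhs => rw [hsplit, truncatedCocycle, cocycle_mul, ← truncatedCocycle, ← hsplit, hnext]
    conv_rhs => rw [hsplit, schreierCocycle_mul, ← hsplit, hnext]
    rw [H₀.coe_mul, hletter, hrest]

theorem exists_monoidHom_eqOn_norm_le (hR : ∀ h ∈ H, h.norm ≤ R → h ∈ H₀) :
    ∃ θ : H →* H₀, ∀ h : H, (h : FreeGroup α).norm ≤ R → (θ h : FreeGroup α) = h := by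
  have fixes (h : H) : (h : FreeGroup α)⁻¹ • ((1 : FreeGroup α) : FreeGroup α ⧸ H) =
      (1 : FreeGroup α) := by simp [QuotientGroup.eq]
  refine ⟨.mk' (fun h ↦ truncatedCocycle H H₀ h (1 : FreeGroup α)) fun h h' ↦ ?_, fun h hh ↦ ?_⟩
  · rw [H.coe_mul, truncatedCocycle, cocycle_mul, fixes]
  · have hmem : FreeGroup.mk ([] ++ (h : FreeGroup α).toWord) ∈ H := by simp [FreeGroup.mk_toWord]
    have hword := truncatedCocycle_suffix hR [] _ hmem hh
    have hcoset : ((h : FreeGroup α) : FreeGroup α ⧸ H) = (1 : FreeGroup α) := by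
      simp [QuotientGroup.eq]
    rw [FreeGroup.mk_toWord, hcoset, schreierCocycle_of_mem H h.2] at hword
    exact hword

variable (H R) in
/-- The subgroup of `H` generated by its elements of length at most `R`. -/
def ballSubgroup : Subgroup (FreeGroup α) := .closure {h | h ∈ H ∧ h.norm ≤ R}

variable (H R) in
theorem ballSubgroup_le : ballSubgroup H R ≤ H := (Subgroup.closure_le H).2 fun _ h ↦ h.1

variable (H R) in
theorem exists_retraction_ballSubgroup :
    ∃ r : H →* ballSubgroup H R, r.comp (Subgroup.inclusion (ballSubgroup_le H R)) = .id _ := by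
  obtain ⟨r, hr⟩ := exists_monoidHom_eqOn_norm_le (H := H) (H₀ := ballSubgroup H R) (R := R)
    fun h hh hnorm ↦ Subgroup.subset_closure ⟨hh, hnorm⟩
  exact ⟨r, MonoidHom.eq_of_eqOn_dense (Subgroup.closure_closure_coe_preimage) fun h hh ↦
    Subtype.ext (hr ⟨h, hh.1⟩ hh.2)⟩

end Schreier

/-- An element `g` such that every endomorphism fixing `g` is an automorphism. -/
def IsTestElement {G : Type*} [Group G] (g : G) : Prop :=
  ∀ φ : G →* G, φ g = g → Function.Bijective φ

/-- Conjugated by `φ`, a retraction of `φ.range` onto `K` becomes an endomorphism fixing `g`; its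
injectivity forces the retraction to be the identity. -/
theorem eq_range_of_retraction {G : Type*} [Group G] {g : G} {φ : G →* G}
    (hinj : ∀ ψ : G →* G, ψ g = g → Function.Injective ψ) (hφ : φ g = g)
    {K : Subgroup G} (hK : K ≤ φ.range) (hgK : g ∈ K) (r : φ.range →* K)
    (hr : r.comp (Subgroup.inclusion hK) = .id K) : K = φ.range := by
  have retract (k : K) : r (Subgroup.inclusion hK k) = k := DFunLike.congr_fun hr k
  let e : G ≃* φ.range := MonoidHom.ofInjective (hinj φ hφ)
  have he : e g = Subgroup.inclusion hK ⟨g, hgK⟩ := Subtype.ext hφ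
  let ψ : G →* G :=
    e.symm.toMonoidHom.comp ((Subgroup.inclusion hK).comp (r.comp e.toMonoidHom))
  have hψ : ψ g = g := by
    simp only [ψ, MonoidHom.comp_apply, MulEquiv.coe_toMonoidHom, he, retract,
      e.symm_apply_eq.2 he.symm]
  have r_inj : Function.Injective r := fun x y hxy ↦ by
    refine e.symm.injective (hinj ψ hψ ?_)
    simp [ψ, hxy]
  refine hK.antisymm fun x hx ↦ ?_
  have hx' : Subgroup.inclusion hK (r ⟨x, hx⟩) = ⟨x, hx⟩ := r_inj (retract _)
  have hx_eq : (r ⟨x, hx⟩ : G) = x := congrArg Subtype.val hx'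
  exact hx_eq ▸ (r ⟨x, hx⟩).2

theorem range_eq_ballSubgroup {α : Type*} [DecidableEq α] {g : FreeGroup α}
    {φ : FreeGroup α →* FreeGroup α}
    (hinj : ∀ ψ : FreeGroup α →* FreeGroup α, ψ g = g → Function.Injective ψ) (hφ : φ g = g) :
    φ.range = ballSubgroup φ.range g.norm := by
  obtain ⟨r, hr⟩ := exists_retraction_ballSubgroup φ.range g.norm
  have hg : g ∈ ballSubgroup φ.range g.norm := Subgroup.subset_closure ⟨⟨g, hφ⟩, le_rfl⟩
  exact (eq_range_of_retraction hinj hφ _ hg r hr).symm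

theorem finite_setOf_norm_le (α : Type*) [DecidableEq α] [Finite α] (R : ℕ) :
    {g : FreeGroup α | g.norm ≤ R}.Finite :=
  (List.finite_length_le (α × Bool) R).preimage FreeGroup.toWord_injective.injOn

theorem surjective_of_finite_range_iterate {X : Type*} {f : X → X} (hf : Function.Injective f)
    (hfin : (Set.range fun k ↦ Set.range f^[k]).Finite) : Function.Surjective f := by
  obtain ⟨k, -, l, -, hkl, heq⟩ := Set.infinite_univ.exists_lt_map_eq_of_mapsTo
    (fun k _ ↦ Set.mem_range_self k) hfin
  intro x
  obtain ⟨y, hy⟩ : f^[k] x ∈ Set.range f^[l] := heq ▸ Set.mem_range_self x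
  have hsplit : f^[l] y = f^[k] (f^[l - k - 1 + 1] y) := by
    rw [← Function.iterate_add_apply]
    congr 2
    lia
  rw [hsplit] at hy
  exact ⟨f^[l - k - 1] y, by rw [← Function.iterate_succ_apply' f, hf.iterate k hy]⟩

/-- Turner: the images of the iterates of `φ` are generated by elements no longer than `g`, so
there are only finitely many of them. -/
theorem isTestElement_of_forall_injective {α : Type*} [Finite α] {g : FreeGroup α}
    (hinj : ∀ φ : FreeGroup α →* FreeGroup α, φ g = g → Function.Injective φ) :
    IsTestElement g := by
  classical
  refine fun φ hφ ↦ ⟨hinj φ hφ, surjective_of_finite_range_iterate (hinj φ hφ) ?_⟩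
  refine ((finite_setOf_norm_le α g.norm).finite_subsets.image
    fun S ↦ (Subgroup.closure S : Set (FreeGroup α))).subset ?_
  rintro _ ⟨k, rfl⟩
  obtain ⟨ψ, hψ⟩ : ∃ ψ : FreeGroup α →* FreeGroup α, ⇑ψ = φ^[k] :=
    ⟨_, Monoid.End.coe_pow (FreeGroup α) φ k⟩
  have fixed : ψ g = g := by rw [hψ, Function.iterate_fixed hφ]
  refine ⟨_, fun h hh ↦ hh.2, (congrArg _ (range_eq_ballSubgroup hinj fixed)).symm.trans ?_⟩
  simp [hψ]

theorem wreath_pow_right {D Q : Type*} [Group D] [Group Q] (a : D ≀ᵣ Q) (k : ℕ) :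
    (a ^ k).right = a.right ^ k :=
  map_pow RegularWreathProduct.rightHom a k

section Wreath
variable {D Q : Type*} [CommGroup D] [Group Q]

theorem wreath_pow_left (a : D ≀ᵣ Q) (k : ℕ) (x : Q) :
    (a ^ k).left x = ∏ i ∈ Finset.range k, a.left ((a.right ^ i)⁻¹ * x) := by
  induction k with
  | zero => rfl
  | succ k ih =>
    rw [pow_succ, RegularWreathProduct.mul_left, Pi.mul_apply, ih, wreath_pow_right,
      Finset.prod_range_succ]

/-- The homomorphism from `D ≀ᵣ Q` to the commutative group `D` multiplying all the coordinates. -/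
@[simps]
def wreathCoordProd [Fintype Q] : D ≀ᵣ Q →* D where
  toFun a := ∏ x, a.left x
  map_one' := Finset.prod_const_one
  map_mul' a b := by
    simp only [RegularWreathProduct.mul_left, Pi.mul_apply, Finset.prod_mul_distrib]
    exact congrArg _ (Equiv.prod_comp (Equiv.mulLeft a.right⁻¹) b.left)

theorem wreath_pow_card_left [Fintype Q] (a : D ≀ᵣ Q) (ha : ∀ x, x ∈ Subgroup.zpowers a.right)
    (x : Q) : (a ^ Nat.card Q).left x = wreathCoordProd a := by
  classical
  have hord : orderOf a.right = Nat.card Q := orderOf_eq_card_of_forall_mem_zpowers ha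
  rw [wreath_pow_left, ← hord, wreathCoordProd_apply,
    ← ((Equiv.inv Q).trans (Equiv.mulRight x)).prod_comp a.left,
    ← IsCyclic.image_range_orderOf ha, Finset.prod_image]
  · rfl
  · simpa using! pow_injOn_Iio_orderOf (x := a.right)

theorem wreath_pow_card_eq_one [Fintype Q] [Fact (Nat.card Q).Prime]
    (hD : ∀ d : D, d ^ Nat.card Q = 1) {a : D ≀ᵣ Q} (ha : wreathCoordProd a = 1) :
    a ^ Nat.card Q = 1 := by
  refine RegularWreathProduct.ext (funext fun x ↦ ?_) ?_
  · by_cases hright : a.right = 1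
    · simp [wreath_pow_left, hright, hD, -Nat.card_eq_fintype_card]
    · rw [wreath_pow_card_left a (fun _ ↦ mem_zpowers_of_prime_card rfl hright), ha]
      rfl
  · rw [wreath_pow_right, pow_card_eq_one']
    rfl

theorem wreath_pow_sq_card_eq_one [Finite Q] (hD : ∀ d : D, d ^ Nat.card Q = 1) (a : D ≀ᵣ Q) :
    a ^ Nat.card Q ^ 2 = 1 := by
  have hright : (a ^ Nat.card Q).right = 1 := by rw [wreath_pow_right, pow_card_eq_one']
  rw [sq, pow_mul]
  refine RegularWreathProduct.ext (funext fun x ↦ ?_) ?_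
  · simp [wreath_pow_left (a ^ Nat.card Q), hright, hD]
  · rw [wreath_pow_right, hright, one_pow]
    rfl

end Wreath

/-- The product of the `m`-th powers of the free generators listed in `l`. -/
def powerWord {α : Type*} (l : List α) (m : ℕ) : FreeGroup α :=
  (l.map fun i ↦ FreeGroup.of i ^ m).prod

theorem map_powerWord {α G : Type*} [Group G] (f : FreeGroup α →* G) (l : List α) (m : ℕ) :
    f (powerWord l m) = (l.map fun i ↦ f (.of i) ^ m).prod := by
  simp [powerWord, map_list_prod, Function.comp_def]

section PowerWord
variable {α C : Type*} [CommGroup C] [Finite C] [Fact (Nat.card C).Prime] {l : List α}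
  {g : FreeGroup α}

theorem eq_one_of_comp_eq_one (hl : l.Nodup) (hmem : ∀ i, i ∈ l)
    (hg : ∀ ρ : FreeGroup α →* C ≀ᵣ C, ρ g = ρ (powerWord l (Nat.card C)))
    {φ : FreeGroup α →* FreeGroup α} (hφ : φ g = g) {χ : FreeGroup α →* C}
    (hχ : χ.comp φ = 1) : χ = 1 := by
  classical
  have := Fintype.ofFinite C
  have : Nontrivial C := Finite.one_lt_card_iff_nontrivial.1 (Fact.out : (Nat.card C).Prime).one_lt
  obtain ⟨z, hz⟩ := exists_ne (1 : C)
  refine FreeGroup.ext_hom _ _ fun i ↦ ?_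
  let ρ : FreeGroup α →* C ≀ᵣ C := FreeGroup.lift fun j ↦
    ⟨Pi.mulSingle 1 (χ (.of j)), if j = i then z else 1⟩
  have coordProd_ρ : wreathCoordProd.comp ρ = χ :=
    FreeGroup.ext_hom _ _ fun j ↦ by simp [ρ]
  have ρφ_pow (j : α) : ρ (φ (.of j)) ^ Nat.card C = 1 :=
    wreath_pow_card_eq_one (fun _ ↦ pow_card_eq_one') <|
      (DFunLike.congr_fun coordProd_ρ (φ (.of j))).trans (DFunLike.congr_fun hχ (.of j))
  have ρ_pow {j : α} (hj : j ≠ i) : ρ (.of j) ^ Nat.card C = 1 :=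
    RegularWreathProduct.ext (funext fun x ↦ by simp [wreath_pow_left, ρ, hj])
      (by simp [wreath_pow_right])
  have ρ_word : ρ (powerWord l (Nat.card C)) = ρ (.of i) ^ Nat.card C := by
    rw [map_powerWord, List.prod_map_eq_pow_single i _ fun j hj _ ↦ ρ_pow hj,
      List.count_eq_one_of_mem hl (hmem i), pow_one]
  have ρ_pow_i : ρ (.of i) ^ Nat.card C = 1 := by
    rw [← ρ_word, ← hg, ← hφ, ← MonoidHom.comp_apply, hg, map_powerWord]
    exact List.prod_eq_one (List.forall_mem_map.2 fun j _ ↦ ρφ_pow j)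
  have hright : (ρ (.of i)).right = z := by simp [ρ]
  calc χ (.of i) = wreathCoordProd (ρ (.of i)) := (DFunLike.congr_fun coordProd_ρ (.of i)).symm
    _ = (ρ (.of i) ^ Nat.card C).left 1 :=
      (wreath_pow_card_left _ (fun _ ↦ mem_zpowers_of_prime_card rfl (hright ▸ hz)) 1).symm
    _ = 1 := by rw [ρ_pow_i]; rfl

theorem isTestElement_of_eq_powerWord [Finite α] (hl : l.Nodup) (hmem : ∀ i, i ∈ l)
    (hg : ∀ ρ : FreeGroup α →* C ≀ᵣ C, ρ g = ρ (powerWord l (Nat.card C))) :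
    IsTestElement g := by
  have : Nontrivial C := Finite.one_lt_card_iff_nontrivial.1 (Fact.out : (Nat.card C).Prime).one_lt
  refine isTestElement_of_forall_injective fun φ hφ ↦ injective_of_injective_precomp (C := C) φ ?_
  let precomp : (FreeGroup α →* C) →* FreeGroup α →* C := MonoidHom.compHom' φ
  exact (injective_iff_map_eq_one precomp).2 fun _ ↦ eq_one_of_comp_eq_one hl hmem hg hφ

end PowerWord

/-- Raising to a power `k ≡ 0 [MOD m]`, `k ≡ 1 [MOD q]` maps `G` into `N` and is the identity on
`Γ`. -/
theorem exists_mem_forall_map_mul_eq {G Γ : Type*} [Group G] [Group Γ] {N : Subgroup G} {m q : ℕ}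
    (hcop : m.Coprime q) (hN : ∀ x : G, x ^ m ∈ N) (hΓ : ∀ z : Γ, z ^ q = 1) (w v : G) :
    ∃ u ∈ N, ∀ ρ : G →* Γ, ρ (w * u) = ρ v := by
  obtain ⟨k, hkm, hkq⟩ := Nat.chineseRemainder hcop 0 1
  have pow_mem_N (x : G) : x ^ k ∈ N := by
    obtain ⟨j, rfl⟩ := Nat.modEq_zero_iff_dvd.1 hkm
    exact pow_mul x m j ▸ N.pow_mem (hN x) j
  have pow_eq_self (z : Γ) : z ^ k = z := by rw [pow_eq_pow_of_modEq hkq (hΓ z), pow_one]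
  exact ⟨(w ^ k)⁻¹ * v ^ k, N.mul_mem (N.inv_mem (pow_mem_N w)) (pow_mem_N v), fun ρ ↦ by
    simp only [map_mul, map_inv, map_pow, pow_eq_self, mul_inv_cancel_left]⟩

end TestElements

open TestElements in
theorem stmt_17_general {α : Type*} [Finite α] (w : FreeGroup α) (N : Subgroup (FreeGroup α))
    (hN : N.index ≠ 0) : ∃ u ∈ N, IsTestElement (w * u) := by
  obtain ⟨p, hlt, hp⟩ := Nat.exists_infinite_primes (N.index + 1)
  have : Fact p.Prime := ⟨hp⟩
  let C := Multiplicative (ZMod p)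
  have card_C : Nat.card C = p := Nat.card_zmod p
  have : Fact (Nat.card C).Prime := ⟨card_C.symm ▸ hp⟩
  have pow_mem_N (x : FreeGroup α) : x ^ N.index.factorial ∈ N :=
    Subgroup.pow_mem_of_index_ne_zero_of_dvd hN x fun _ ↦ Nat.dvd_factorial
  have coprime_exponents : N.index.factorial.Coprime (Nat.card C ^ 2) := by
    rw [card_C]
    exact (hp.coprime_factorial_of_lt hlt).symm.pow_right 2
  obtain ⟨l, hl, hmem⟩ := Finite.exists_univ_list α
  obtain ⟨u, hu, hword⟩ := exists_mem_forall_map_mul_eq (Γ := C ≀ᵣ C) coprime_exponents pow_mem_N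
    (wreath_pow_sq_card_eq_one fun _ ↦ pow_card_eq_one') w (powerWord l (Nat.card C))
  exact ⟨u, hu, isTestElement_of_eq_powerWord hl hmem hword⟩

theorem stmt_17 {n : ℕ} (hn : 1 ≤ n) (w : FreeGroup (Fin n))
    (N : Subgroup (FreeGroup (Fin n))) (hN : N.Normal) (hNfin : N.index ≠ 0) :
    ∃ t : FreeGroup (Fin n), (∃ u ∈ N, t = w * u) ∧
      ∀ φ : FreeGroup (Fin n) →* FreeGroup (Fin n), φ t = t → Function.Bijective φ := by
  obtain ⟨u, hu, htest⟩ := stmt_17_general w N hNfin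
  exact ⟨w * u, ⟨u, hu, rfl⟩, htest⟩
end
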